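/- Let G be a finitely presented residually finite group with rdef(G) > 1, and let g₁,…,g_m be non-trivial elements of G. For a natural number k, let H_k denote the normal closure in G of {g₁^k,…,g_m^k}. Then there are infinitely many natural numbers k for which rdef(G/H_k) > 1. -/

import Mathlib

/-!
Two facts give the theorem.

*A bound for residual deficiency.* `rdef` is a supremum of reals, so one first needs that the set
of values `n - ∑ 1 / k_i` is bounded above. If the group `A` is generated by `r` elements, every
such value is at most `r` (`bddAbove_rdefSet`). Choose a finite quotient `Q` of `A` in which the
image of each root `u_i` has order at least `k_i`. The derivations of the free group `F_n` with
values in the coinduced module `Q → ℚ` form a space of dimension `n |Q|` (Fox calculus,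
`exists_foxDerivation`). Killing the relator `u_i ^ m_i` costs at most `|Q| / k_i` linear
conditions, because the value of a derivation on `u_i ^ m_i` is fixed by `u_i`; the derivations
that kill all relators factor through `A` and are determined by their values on `r` generators.
Comparing dimensions gives `n |Q| ≤ r |Q| + ∑ |Q| / k_i` (`natCast_le_of_finite_quotient`).

*Adding relators.* Take a presentation of `G` with `n - ∑ 1 / k_i > 1`. Write a lift of each
`g_j` of infinite order as a power of some `v_j` that is not a proper power
(`exists_root`). By residual finiteness there is a finite index normal subgroup `N` modulo which
`u_i` has order at least `k_i` and `v_j` has order at least a prescribed large `L`. If `k` is a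
positive multiple of the index of `N` and of the orders of the torsion elements among the `g_j`,
then `H_k ≤ N`, so these lower bounds persist in `G ⧸ H_k` modulo its finite residual, and the
torsion `g_j` contribute no new relator. The resulting presentation of `G ⧸ H_k` has residual
deficiency at least `n - ∑ 1 / k_i - m / L > 1`.
-/

open scoped Classical ENNReal

namespace ResDef

variable {G : Type*} [Group G]

/-- The order of the image of `x` in `G ⧸ H`: the least positive `j` with `x ^ j ∈ H`,
or `0` if there is no such `j`. -/
noncomputable def orderIn (H : Subgroup G) (x : G) : ℕ :=
  sInf {j : ℕ | 0 < j ∧ x ^ j ∈ H}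

/-- The finite residual: the intersection of all finite index subgroups. -/
def finiteResidual (G : Type*) [Group G] : Subgroup G :=
  ⨅ (H : Subgroup G) (_ : H.index ≠ 0), H

/-- An element of a free group is not a proper power. -/
def NotProperPower {α : Type*} (u : FreeGroup α) : Prop :=
  ∀ (v : FreeGroup α) (k : ℕ), u = v ^ k → k = 1

/-- `G` admits a finite presentation. -/
def FinitelyPresentedGroup (G : Type*) [Group G] : Prop :=
  ∃ (n : ℕ) (R : Finset (FreeGroup (Fin n))) (φ : FreeGroup (Fin n) →* G),
    Function.Surjective φ ∧ φ.ker = Subgroup.normalClosure (R : Set (FreeGroup (Fin n)))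

/-- The deficiency of a finitely presented group. -/
noncomputable def deficiency (G : Type*) [Group G] : ℝ :=
  sSup {x : ℝ | ∃ (n : ℕ) (R : Finset (FreeGroup (Fin n))) (φ : FreeGroup (Fin n) →* G),
    Function.Surjective φ ∧ φ.ker = Subgroup.normalClosure (R : Set (FreeGroup (Fin n))) ∧
    x = (n : ℝ) - (R.card : ℝ)}

/-- The residual deficiency of a finitely presented group. -/
noncomputable def rdef (G : Type*) [Group G] : ℝ :=
  sSup {x : ℝ | ∃ (n s : ℕ) (u : Fin s → FreeGroup (Fin n)) (m : Fin s → ℕ)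
    (φ : FreeGroup (Fin n) →* G),
    (∀ i, 1 ≤ m i) ∧ (∀ i, NotProperPower (u i)) ∧ Function.Surjective φ ∧
    φ.ker = Subgroup.normalClosure (Set.range fun i => u i ^ m i) ∧
    x = (n : ℝ) - ∑ i, ((orderIn (finiteResidual G) (φ (u i)) : ℝ))⁻¹}

/-- The deficiency gradient. -/
noncomputable def DG (G : Type*) [Group G] : ℝ :=
  sSup {x : ℝ | ∃ H : Subgroup G, H.index ≠ 0 ∧
    x = (deficiency H - 1) / (H.index : ℝ)}

/-- `ν_p(r)`: the largest `k` such that `r = s ^ (p ^ k)` for some `s`. -/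
noncomputable def nuP (p : ℕ) {α : Type*} (r : FreeGroup α) : ℕ :=
  sSup {k : ℕ | ∃ s : FreeGroup α, r = s ^ (p ^ k)}

/-- The `p`-deficiency of a group. -/
noncomputable def defP (p : ℕ) (G : Type*) [Group G] : ℝ :=
  sSup {x : ℝ | ∃ (n : ℕ) (R : Set (FreeGroup (Fin n))) (φ : FreeGroup (Fin n) →* G),
    Function.Surjective φ ∧ φ.ker = Subgroup.normalClosure R ∧
    Summable (fun r : R => ((p : ℝ) ^ (nuP p r.1))⁻¹) ∧
    x = (n : ℝ) - ∑' r : R, ((p : ℝ) ^ (nuP p r.1))⁻¹}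

/-- The `p`-deficiency gradient. -/
noncomputable def DGp (p : ℕ) (G : Type*) [Group G] : ℝ :=
  sSup {x : ℝ | ∃ H : Subgroup G, H.Normal ∧ H.index ≠ 0 ∧
    x = (defP p H - 1) / (H.index : ℝ)}

/-- The rank (minimal number of generators) of a group. -/
noncomputable def grpRank (G : Type*) [Group G] : ℕ :=
  sInf {n : ℕ | ∃ S : Finset G, S.card = n ∧ Subgroup.closure (S : Set G) = ⊤}

/-- The rank gradient. -/
noncomputable def RG (G : Type*) [Group G] : ℝ :=
  sInf {x : ℝ | ∃ H : Subgroup G, H.index ≠ 0 ∧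
    x = ((grpRank H : ℝ) - 1) / (H.index : ℝ)}

/-- The `p`-rank: the largest `n` such that `G` surjects onto `(C_p)^n`. -/
noncomputable def pRank (p : ℕ) (G : Type*) [Group G] : ℕ :=
  sSup {n : ℕ | ∃ f : G →* (Fin n → Multiplicative (ZMod p)), Function.Surjective f}

/-- The `p`-rank gradient. -/
noncomputable def RGp (p : ℕ) (G : Type*) [Group G] : ℝ :=
  sInf {x : ℝ | ∃ H : Subgroup G, H.Normal ∧ H.index ≠ 0 ∧
    x = ((pRank p H : ℝ) - 1) / (H.index : ℝ)}

/-- `G` is large: some finite index subgroup surjects onto a free group of rank 2. -/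
def Large (G : Type*) [Group G] : Prop :=
  ∃ H : Subgroup G, H.index ≠ 0 ∧ ∃ f : H →* FreeGroup (Fin 2), Function.Surjective f

/-- The first Betti number: the largest `n` such that `G` surjects onto `ℤ^n`. -/
noncomputable def firstBetti (G : Type*) [Group G] : ℕ :=
  sSup {n : ℕ | ∃ f : G →* Multiplicative (Fin n → ℤ), Function.Surjective f}

/-- The order of the image of `x` in `G ⧸ H`, as an extended natural number. -/
noncomputable def orderInE (H : Subgroup G) (x : G) : ℕ∞ :=
  if orderIn H x = 0 then ⊤ else (orderIn H x : ℕ∞)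

/-- `ν(g; G, K)` from the paper, valued in `ℕ∞`. -/
noncomputable def nu (K : Subgroup G) (g : G) : ℕ∞ :=
  if g ∈ K then
    sSup ((fun a : G => orderInE K a) '' {a : G | ∃ n : ℤ, a ^ n = g})
  else
    sSup ((fun q : G × ℤ => (q.2.natAbs : ℕ∞)) '' {q : G × ℤ | q.2 ≠ 0 ∧ q.1 ^ q.2 = g})

/-- The relative size `ν(g;G,K)⁻¹` of an element (`0` if `ν` is infinite). -/
noncomputable def relsizeElem (K : Subgroup G) (g : G) : ℝ :=
  (((nu K g).toNat : ℝ))⁻¹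

/-- The relative size of a finite set. -/
noncomputable def relsizeFinset (K : Subgroup G) (S : Finset G) : ℝ :=
  ∑ g ∈ S, relsizeElem K g

/-- The relative size of a normal subgroup `M`, finitely generated as a normal subgroup. -/
noncomputable def relsizeSubgroup (K M : Subgroup G) : ℝ :=
  sInf {x : ℝ | ∃ S : Finset G, Subgroup.normalClosure (S : Set G) = M ∧
    x = relsizeFinset K S}

/-- `a` is a minimal root of `g` in `G` with respect to `K`. -/
def IsMinimalRoot (K : Subgroup G) (g a : G) : Prop :=
  (g ∈ K ∧ (∃ n : ℤ, a ^ n = g) ∧ ((orderIn K a : ℕ∞) = nu K g)) ∨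
  (g ∉ K ∧ ∃ m : ℕ, (m : ℕ∞) = nu K g ∧ a ^ m = g)


/-! ### Roots in free groups -/

/-- If the reduced word of `v` is `c z c⁻¹` with `z` cyclically reduced, then for `0 < k` that of
`v ^ k` is `c z ⋯ z c⁻¹`, and `z` is not empty. -/
theorem le_norm_pow {α : Type*} (v : FreeGroup α) (hv : v ≠ 1) (k : ℕ) :
    k ≤ (v ^ k).norm := by
  rcases k with _ | k
  · simp
  have h1 := (FreeGroup.toWord_pow v (k + 1)).trans
    (FreeGroup.reduceCyclically.reduce_flatten_replicate_succ FreeGroup.isReduced_toWord k)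
  -- If the cyclic reduction were empty, `v` and `v ^ 2` would have the same reduced word.
  have hc : FreeGroup.reduceCyclically v.toWord ≠ [] := by
    intro h0
    have h2 := FreeGroup.reduceCyclically.reduce_flatten_replicate_succ
      (FreeGroup.isReduced_toWord (x := v)) 0
    rw [h0] at h2
    have h3 := FreeGroup.reduceCyclically.reduce_flatten_replicate_succ
      (FreeGroup.isReduced_toWord (x := v)) 1
    rw [h0] at h3
    have h4 : (v ^ 1).toWord = (v ^ 2).toWord := by
      rw [FreeGroup.toWord_pow, FreeGroup.toWord_pow]
      exact h2.trans (by rw [h3]; simp)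
    have h5 := FreeGroup.toWord_injective h4
    apply hv
    rw [pow_one, pow_two] at h5
    simpa using h5
  have hl := List.length_pos_iff.2 hc
  unfold FreeGroup.norm
  rw [h1]
  simp only [List.length_append, List.length_flatten, List.map_replicate, List.sum_replicate,
    smul_eq_mul]
  nlinarith

/-- Every nontrivial element of a free group has a root that is not a proper power: a root of
maximal exponent, which exists because the length of `v ^ k` is at least `k`. -/
theorem exists_root {α : Type*} (w : FreeGroup α) (hw : w ≠ 1) :
    ∃ (v : FreeGroup α) (e : ℕ), NotProperPower v ∧ w = v ^ e := by
  let P : ℕ → Prop := fun e => ∃ v : FreeGroup α, w = v ^ e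
  have hb : ∀ e, P e → e ≤ w.norm := by
    rintro e ⟨v, rfl⟩
    refine le_norm_pow v ?_ e
    rintro rfl
    simp at hw
  have h1 : P 1 := ⟨w, by simp⟩
  have hP := Nat.findGreatest_spec (P := P) (hb 1 h1) h1
  have hpos : 1 ≤ Nat.findGreatest P w.norm := Nat.le_findGreatest (hb 1 h1) h1
  set e := Nat.findGreatest P w.norm
  obtain ⟨v, hv⟩ := hP
  refine ⟨v, e, fun x k hx => ?_, hv⟩
  have hk : P (k * e) := ⟨x, by rw [hv, hx, pow_mul]⟩
  have hle : k * e ≤ e := Nat.le_findGreatest (hb _ hk) hk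
  have hk0 : k ≠ 0 := by
    rintro rfl
    apply hw
    rw [hv, hx]
    simp
  have : k ≤ 1 := by
    by_contra hcon
    nlinarith
  omega

/-! ### Fox calculus and the dimension count -/

/-- The universal derivation of a free group with values in a representation `V`: the linear map
`δ x` sends a choice `t` of values on the free generators to the value at `x` of the derivation
that extends `t`. -/
theorem exists_foxDerivation {α V : Type*} [AddCommGroup V] [Module ℚ V]
    (ρ : Representation ℚ (FreeGroup α) V) :
    ∃ δ : FreeGroup α → ((α → V) →ₗ[ℚ] V),
      (∀ a, δ (FreeGroup.of a) = LinearMap.proj a) ∧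
      ∀ x y, δ (x * y) = δ x + ρ x ∘ₗ δ y := by
  have hinv : ∀ (x : FreeGroup α) (w : (α → V) →ₗ[ℚ] V), ρ x⁻¹ ∘ₗ (ρ x ∘ₗ w) = w := by
    intro x w
    ext1 t
    simp
  have hinv' : ∀ (x : FreeGroup α) (w : (α → V) →ₗ[ℚ] V), ρ x ∘ₗ (ρ x⁻¹ ∘ₗ w) = w := by
    intro x w
    ext1 t
    simp
  -- A derivation is the translation part of an affine action with linear part `ρ`.
  let T : α → Equiv.Perm ((α → V) →ₗ[ℚ] V) := fun a =>
    { toFun := fun w => ρ (FreeGroup.of a) ∘ₗ w + LinearMap.proj a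
      invFun := fun w => ρ (FreeGroup.of a)⁻¹ ∘ₗ (w - LinearMap.proj a)
      left_inv := fun w => by simp [hinv]
      right_inv := fun w => by simp [hinv'] }
  let Φ := FreeGroup.lift T
  have haff : ∀ x w, Φ x w = ρ x ∘ₗ w + Φ x 0 := by
    intro x
    induction x using FreeGroup.induction_on with
    | C1 => intro w; ext1 t; simp
    | of a =>
      intro w
      simp [Φ, T]
    | inv_of a h =>
      intro w
      simp only [Φ, T, map_inv, FreeGroup.lift_apply_of, Equiv.Perm.inv_def, Equiv.symm,
        Equiv.coe_fn_mk, LinearMap.comp_sub, LinearMap.comp_zero]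
      abel
    | mul x y hx hy =>
      intro w
      rw [map_mul, Equiv.Perm.mul_apply, hy, hx, Equiv.Perm.mul_apply, hx (Φ y 0), map_mul,
        LinearMap.comp_add]
      rw [Module.End.mul_eq_comp, LinearMap.comp_assoc]
      abel
  refine ⟨fun x => Φ x 0, fun a => by simp [Φ, T], fun x y => ?_⟩
  change Φ (x * y) 0 = _
  rw [map_mul, Equiv.Perm.mul_apply, haff, add_comm]

/-- The representation of `Q` on functions `Q → ℚ` by right translation. -/
def rightTranslation (Q : Type*) [Group Q] : Representation ℚ Q (Q → ℚ) where
  toFun q := LinearMap.funLeft ℚ ℚ (fun x => x * q)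
  map_one' := by ext; simp [LinearMap.funLeft_apply]
  map_mul' a b := by
    ext1 f
    funext x
    simp [LinearMap.funLeft_apply, mul_assoc]

theorem rightTranslation_apply {Q : Type*} [Group Q] (q : Q) (f : Q → ℚ) (x : Q) :
    rightTranslation Q q f x = f (x * q) := rfl

/-- A function on `Q` that is fixed by right translation by `q` and vanishes at one
representative of each left coset of `⟨q⟩` is zero. -/
theorem eq_zero_of_fixed {Q : Type*} [Group Q] {q : Q} {f : Q → ℚ}
    (hf : rightTranslation Q q f = f)
    (h0 : ∀ c : Q ⧸ Subgroup.zpowers q, f (Quotient.out c) = 0) : f = 0 := by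
  have hz : ∀ z ∈ Subgroup.zpowers q, ∀ x, f (x * z) = f x := by
    intro z hz
    rw [Subgroup.zpowers_eq_closure] at hz
    induction hz using Subgroup.closure_induction with
    | mem y hy =>
      intro x
      rw [Set.mem_singleton_iff.1 hy]
      exact congrFun hf x
    | one => simp
    | mul y z _ _ ihy ihz =>
      intro x
      rw [← mul_assoc, ihz, ihy]
    | inv y _ ih =>
      intro x
      rw [← ih, inv_mul_cancel_right]
  funext x
  obtain ⟨z, hz'⟩ := QuotientGroup.mk_out_eq_mul (Subgroup.zpowers q) x
  have := h0 (x : Q ⧸ Subgroup.zpowers q)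
  rw [show Quotient.out (x : Q ⧸ Subgroup.zpowers q) = x * z from hz', hz _ z.2] at this
  exact this

/-- A derivation that vanishes on the relators of a presentation of `A` descends to `A`, so it is
zero if it vanishes on lifts of generators of `A`. -/
theorem deriv_eq_zero_of_generators {A V : Type*} [Group A] [AddCommGroup V] [Module ℚ V]
    {n s r : ℕ} {R : Fin s → FreeGroup (Fin n)} {φ : FreeGroup (Fin n) →* A}
    (hker : φ.ker = Subgroup.normalClosure (Set.range R))
    (ρ : Representation ℚ (FreeGroup (Fin n)) V) (hρ : ∀ x ∈ φ.ker, ρ x = 1)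
    (d : FreeGroup (Fin n) → V) (hd : ∀ x y, d (x * y) = d x + ρ x (d y))
    (hR : ∀ i, d (R i) = 0) (y : Fin r → FreeGroup (Fin n))
    (hy : Subgroup.closure (Set.range fun l => φ (y l)) = ⊤) (hdy : ∀ l, d (y l) = 0)
    (x : FreeGroup (Fin n)) : d x = 0 := by
  have h1 : d 1 = 0 := by simpa using hd 1 1
  have hinv : ∀ x, d x⁻¹ = - ρ x⁻¹ (d x) := by
    intro x
    have := hd x⁻¹ x
    rw [inv_mul_cancel, h1] at this
    exact eq_neg_of_add_eq_zero_left this.symm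
  let S : Subgroup (FreeGroup (Fin n)) :=
    { carrier := {x | d x = 0}
      one_mem' := h1
      mul_mem' := fun {a b} ha hb => by
        simp only [Set.mem_ofPred_eq] at *
        rw [hd, ha, hb, map_zero, add_zero]
      inv_mem' := fun {a} ha => by
        simp only [Set.mem_ofPred_eq] at *
        rw [hinv, ha, map_zero, neg_zero] }
  have hkerS : ∀ x ∈ φ.ker, d x = 0 := by
    intro x hx
    rw [hker] at hx
    induction hx using Subgroup.closure_induction with
    | mem x hx =>
      obtain ⟨_, ⟨i, rfl⟩, hc⟩ := Group.mem_conjugatesOfSet_iff.1 hx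
      obtain ⟨b, rfl⟩ := isConj_iff.1 hc
      have hk : ρ (R i) = 1 := hρ _ (by rw [hker]; exact Subgroup.subset_normalClosure ⟨i, rfl⟩)
      rw [hd, hd, hR, map_zero, add_zero, map_mul, hk, mul_one, ← hd, mul_inv_cancel, h1]
    | one => exact h1
    | mul a b ha hb iha ihb => rw [hd, iha, ihb, map_zero, add_zero]
    | inv a ha iha => rw [hinv, iha, map_zero, neg_zero]
  have hx : φ x ∈ S.map φ := by
    have : Subgroup.closure (Set.range fun l => φ (y l)) ≤ S.map φ := by
      rw [Subgroup.closure_le]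
      rintro _ ⟨l, rfl⟩
      exact ⟨y l, hdy l, rfl⟩
    exact this (hy ▸ Subgroup.mem_top _)
  obtain ⟨z, hz, hzx⟩ := hx
  have hk : d (z⁻¹ * x) = 0 := hkerS _ (by rw [MonoidHom.mem_ker, map_mul, map_inv, hzx]; simp)
  have hz' : d z = 0 := hz
  rw [show x = z * (z⁻¹ * x) by group, hd, hz', hk, map_zero, add_zero]

/-- The dimension count: a derivation `F_n → (Q → ℚ)` is determined by the values that its
values on the relators take at coset representatives, together with its values on lifts of
the `r` generators. -/
theorem finrank_inequality {A Q : Type*} [Group A] [Group Q] [Finite Q]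
    {n s r : ℕ} {u : Fin s → FreeGroup (Fin n)} {m : Fin s → ℕ} {φ : FreeGroup (Fin n) →* A}
    (hφ : Function.Surjective φ)
    (hker : φ.ker = Subgroup.normalClosure (Set.range fun i => u i ^ m i))
    (π : A →* Q) (y : Fin r → A) (hy : Subgroup.closure (Set.range y) = ⊤) :
    n * Nat.card Q ≤ (∑ i, Nat.card (Q ⧸ Subgroup.zpowers (π (φ (u i))))) + r * Nat.card Q := by
  have := Fintype.ofFinite Q
  let ρ : Representation ℚ (FreeGroup (Fin n)) (Q → ℚ) := (rightTranslation Q).comp (π.comp φ)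
  have hρ : ∀ x ∈ φ.ker, ρ x = 1 := by
    intro x hx
    rw [MonoidHom.mem_ker] at hx
    simp [ρ, hx]
  obtain ⟨δ, hδ, hδm⟩ := exists_foxDerivation ρ
  choose y' hy' using fun l => hφ (y l)
  let L : (Fin n → Q → ℚ) →ₗ[ℚ]
      ((i : Fin s) → (Q ⧸ Subgroup.zpowers (π (φ (u i)))) → ℚ) × (Fin r → Q → ℚ) :=
    (LinearMap.pi fun i => LinearMap.funLeft ℚ ℚ Quotient.out ∘ₗ δ (u i ^ m i)).prod
      (LinearMap.pi fun l => δ (y' l))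
  have hL : Function.Injective L := by
    rw [← LinearMap.ker_eq_bot, LinearMap.ker_eq_bot']
    intro t ht
    have ht1 : ∀ i c, δ (u i ^ m i) t (Quotient.out c) = 0 := fun i c =>
      congrFun (congrFun (congrArg Prod.fst ht) i) c
    have ht2 : ∀ l, δ (y' l) t = 0 := fun l => congrFun (congrArg Prod.snd ht) l
    have hrel : ∀ i, δ (u i ^ m i) t = 0 := by
      intro i
      refine eq_zero_of_fixed ?_ (ht1 i)
      have hk : ρ (u i ^ m i) = 1 :=
        hρ _ (by rw [hker]; exact Subgroup.subset_normalClosure ⟨i, rfl⟩)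
      -- Expand the derivation on `u * u ^ m = u ^ m * u` in both ways.
      have e1 := hδm (u i) (u i ^ m i)
      have e2 := hδm (u i ^ m i) (u i)
      rw [← pow_succ', pow_succ, e2, hk] at e1
      have e3 := LinearMap.congr_fun e1 t
      simp only [LinearMap.add_apply, LinearMap.comp_apply, Module.End.one_apply] at e3
      rw [add_comm] at e3
      exact (add_left_cancel e3).symm
    have hall := deriv_eq_zero_of_generators hker ρ hρ (fun x => δ x t)
      (fun a b => by simp [hδm]) hrel y' (by simpa [hy'] using hy) ht2
    funext a
    have := hall (FreeGroup.of a)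
    simpa [hδ] using this
  have := LinearMap.finrank_le_finrank_of_injective hL
  simpa [Module.finrank_prod, Module.finrank_pi_fintype, Nat.card_eq_fintype_card] using this

/-- `finrank_inequality` divided by `|Q|`. -/
theorem natCast_le_of_finite_quotient {A Q : Type*} [Group A] [Group Q] [Finite Q]
    {n s r : ℕ} {u : Fin s → FreeGroup (Fin n)} {m : Fin s → ℕ} {φ : FreeGroup (Fin n) →* A}
    (hφ : Function.Surjective φ)
    (hker : φ.ker = Subgroup.normalClosure (Set.range fun i => u i ^ m i))
    (π : A →* Q) (y : Fin r → A) (hy : Subgroup.closure (Set.range y) = ⊤) :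
    (n : ℝ) ≤ ∑ i, ((orderOf (π (φ (u i))) : ℝ))⁻¹ + r := by
  have h := finrank_inequality hφ hker π y hy
  have hQ : (0 : ℝ) < Nat.card Q := by exact_mod_cast Nat.card_pos
  have hc : ∀ i, (Nat.card (Q ⧸ Subgroup.zpowers (π (φ (u i)))) : ℝ)
      = ((orderOf (π (φ (u i))) : ℝ))⁻¹ * Nat.card Q := by
    intro i
    have h1 := Subgroup.card_eq_card_quotient_mul_card_subgroup
      (Subgroup.zpowers (π (φ (u i))))
    rw [Nat.card_zpowers] at h1
    have h2 : (orderOf (π (φ (u i))) : ℝ) ≠ 0 := by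
      exact_mod_cast (orderOf_pos _).ne'
    rw [h1]
    push_cast
    field_simp
  have h' : (n : ℝ) * Nat.card Q ≤
      (∑ i, (Nat.card (Q ⧸ Subgroup.zpowers (π (φ (u i)))) : ℝ)) + r * Nat.card Q := by
    exact_mod_cast h
  simp only [hc] at h'
  rw [← Finset.sum_mul, ← add_mul] at h'
  exact le_of_mul_le_mul_right h' hQ

/-! ### Orders modulo the finite residual -/

theorem le_orderIn {A : Type*} [Group A] {H : Subgroup A} {x : A} {L : ℕ}
    (hex : ∃ j, 0 < j ∧ x ^ j ∈ H) (h : ∀ j, 0 < j → x ^ j ∈ H → L ≤ j) : L ≤ orderIn H x := by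
  have := Nat.sInf_mem (s := {j : ℕ | 0 < j ∧ x ^ j ∈ H}) hex
  exact h _ this.1 this.2

theorem notMem_of_lt_orderIn {A : Type*} [Group A] {H : Subgroup A} {x : A} {j : ℕ}
    (hj : 0 < j) (h : j < orderIn H x) : x ^ j ∉ H :=
  fun hx => Nat.notMem_of_lt_sInf h ⟨hj, hx⟩

theorem orderIn_pos {A : Type*} [Group A] {H : Subgroup A} {x : A}
    (hex : ∃ j, 0 < j ∧ x ^ j ∈ H) : 0 < orderIn H x :=
  (Nat.sInf_mem (s := {j : ℕ | 0 < j ∧ x ^ j ∈ H}) hex).1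

/-- Finitely many elements outside the finite residual are avoided by a single finite index normal
subgroup. -/
theorem exists_normal_avoiding {A : Type*} [Group A] (S : Set A) (hS : S.Finite)
    (h : ∀ x ∈ S, x ∉ finiteResidual A) :
    ∃ N : Subgroup A, N.Normal ∧ N.index ≠ 0 ∧ ∀ x ∈ S, x ∉ N := by
  induction S, hS using Set.Finite.induction_on with
  | empty => exact ⟨⊤, inferInstance, by simp, by simp⟩
  | @insert a S _ _ ih =>
    obtain ⟨N, hN, hNi, hNS⟩ := ih fun x hx => h x (Set.mem_insert_of_mem _ hx)
    have ha := h a (Set.mem_insert _ _)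
    simp only [finiteResidual, Subgroup.mem_iInf, not_forall] at ha
    obtain ⟨H, hH, haH⟩ := ha
    have : H.FiniteIndex := ⟨hH⟩
    refine ⟨N ⊓ H.normalCore, inferInstance, ?_, ?_⟩
    · exact Subgroup.index_inf_ne_zero hNi Subgroup.FiniteIndex.index_ne_zero
    · rintro x (rfl | hx) hxN
      · exact haH (H.normalCore_le hxN.2)
      · exact hNS x hx hxN.1

/-- A finite index normal subgroup modulo which finitely many elements have at least prescribed
orders. -/
theorem exists_normal_order_ge {A ι : Type*} [Group A] [Finite ι] (x : ι → A) (k : ι → ℕ)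
    (h : ∀ i j, 0 < j → j < k i → x i ^ j ∉ finiteResidual A) :
    ∃ N : Subgroup A, N.Normal ∧ N.index ≠ 0 ∧ ∀ i j, 0 < j → x i ^ j ∈ N → k i ≤ j := by
  obtain ⟨N, h1, h2, h3⟩ := exists_normal_avoiding
    (⋃ i, (fun j => x i ^ j) '' Set.Ioo 0 (k i))
    (Set.finite_iUnion fun i => (Set.finite_Ioo _ _).image _) (by
      simp only [Set.mem_iUnion, Set.mem_image, Set.mem_Ioo]
      rintro _ ⟨i, j, hj, rfl⟩
      exact h i j hj.1 hj.2)
  refine ⟨N, h1, h2, fun i j hj hx => ?_⟩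
  by_contra hcon
  exact h3 _ (Set.mem_iUnion.2 ⟨i, j, ⟨hj, not_le.1 hcon⟩, rfl⟩) hx

/-! ### Residual deficiency as a genuine supremum -/

/-- The residual deficiencies of the finite presentations of `A`. -/
def rdefSet (A : Type*) [Group A] : Set ℝ :=
  {x : ℝ | ∃ (n s : ℕ) (u : Fin s → FreeGroup (Fin n)) (m : Fin s → ℕ)
    (φ : FreeGroup (Fin n) →* A),
    (∀ i, 1 ≤ m i) ∧ (∀ i, NotProperPower (u i)) ∧ Function.Surjective φ ∧
    φ.ker = Subgroup.normalClosure (Set.range fun i => u i ^ m i) ∧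
    x = (n : ℝ) - ∑ i, ((orderIn (finiteResidual A) (φ (u i)) : ℝ))⁻¹}

theorem pow_mem_of_ker_eq {A ι : Type*} [Group A] {n : ℕ} {u : ι → FreeGroup (Fin n)}
    {m : ι → ℕ} {φ : FreeGroup (Fin n) →* A} (hm : ∀ i, 1 ≤ m i)
    (hker : φ.ker = Subgroup.normalClosure (Set.range fun i => u i ^ m i)) (H : Subgroup A)
    (i : ι) : ∃ j, 0 < j ∧ φ (u i) ^ j ∈ H := by
  refine ⟨m i, hm i, ?_⟩
  have : u i ^ m i ∈ φ.ker := by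
    rw [hker]
    exact Subgroup.subset_normalClosure ⟨i, rfl⟩
  rw [← map_pow, MonoidHom.mem_ker.1 this]
  exact one_mem _

/-- The residual deficiency of a presentation is at most the number of elements of any finite
generating set. -/
theorem bddAbove_rdefSet (A : Type*) [Group A] [Group.FG A] : BddAbove (rdefSet A) := by
  obtain ⟨S, hS⟩ : (⊤ : Subgroup A).FG := Group.fg_def.1 inferInstance
  let y : Fin S.card → A := fun l => (S.equivFin.symm l : A)
  have hy : Subgroup.closure (Set.range y) = ⊤ := by
    have : Set.range y = S := by
      ext a
      constructor
      · rintro ⟨l, rfl⟩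
        exact (S.equivFin.symm l).2
      · intro ha
        exact ⟨S.equivFin ⟨a, ha⟩, by simp [y]⟩
    rw [this, hS]
  refine ⟨S.card, ?_⟩
  rintro x ⟨n, s, u, m, φ, hm, -, hφ, hker, rfl⟩
  obtain ⟨N, hN, hNi, hNo⟩ := exists_normal_order_ge (fun i => φ (u i))
    (fun i => orderIn (finiteResidual A) (φ (u i)))
    (fun i j hj hlt => notMem_of_lt_orderIn hj hlt)
  have : N.FiniteIndex := ⟨hNi⟩
  have h := natCast_le_of_finite_quotient hφ hker (QuotientGroup.mk' N) y hy
  have hle : ∑ i, ((orderOf (QuotientGroup.mk' N (φ (u i))) : ℝ))⁻¹ ≤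
      ∑ i, ((orderIn (finiteResidual A) (φ (u i)) : ℝ))⁻¹ := by
    refine Finset.sum_le_sum fun i _ => ?_
    have h0 := orderIn_pos (pow_mem_of_ker_eq hm hker (finiteResidual A) i)
    refine inv_anti₀ (by exact_mod_cast h0) ?_
    have := hNo i (orderOf (QuotientGroup.mk' N (φ (u i)))) (orderOf_pos _) (by
      rw [← QuotientGroup.eq_one_iff, QuotientGroup.mk_pow]
      exact pow_orderOf_eq_one (QuotientGroup.mk' N (φ (u i))))
    exact_mod_cast this
  linarith

/-- A presentation with relators indexed by any finite type bounds `rdef` from below. Boundedness of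
the set of values matters here, since the real supremum of an unbounded set is `0`. -/
theorem le_rdef {A ι : Type*} [Group A] [Group.FG A] [Fintype ι] {n : ℕ}
    (u : ι → FreeGroup (Fin n)) (m : ι → ℕ) (φ : FreeGroup (Fin n) →* A)
    (hm : ∀ i, 1 ≤ m i) (hu : ∀ i, NotProperPower (u i)) (hφ : Function.Surjective φ)
    (hker : φ.ker = Subgroup.normalClosure (Set.range fun i => u i ^ m i)) :
    (n : ℝ) - ∑ i, ((orderIn (finiteResidual A) (φ (u i)) : ℝ))⁻¹ ≤ rdef A := by
  refine le_csSup (bddAbove_rdefSet A) ?_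
  let e := (Fintype.equivFin ι).symm
  refine ⟨n, Fintype.card ι, u ∘ e, m ∘ e, φ, fun i => hm _, fun i => hu _, hφ, ?_, ?_⟩
  · rw [hker, ← e.surjective.range_comp]
    rfl
  · rw [← e.sum_comp]
    rfl

/-! ### Presentations of quotients -/

/-- Dividing `A = ⟨X | R⟩` by the normal closure of the image of `T` gives `⟨X | R ∪ T⟩`. -/
theorem ker_mk_comp {F A : Type*} [Group F] [Group A] {φ : F →* A}
    (hφ : Function.Surjective φ) {R T : Set F} (hker : φ.ker = Subgroup.normalClosure R)
    {H : Subgroup A} [H.Normal] (hH : H = Subgroup.normalClosure (φ '' T)) :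
    ((QuotientGroup.mk' H).comp φ).ker = Subgroup.normalClosure (R ∪ T) := by
  rw [← MonoidHom.comap_ker, QuotientGroup.ker_mk', hH, ← Subgroup.map_normalClosure _ _ hφ,
    Subgroup.comap_map_eq, hker]
  apply le_antisymm
  · exact sup_le (Subgroup.normalClosure_mono Set.subset_union_right)
      (Subgroup.normalClosure_mono Set.subset_union_left)
  · refine Subgroup.normalClosure_le_normal (Set.union_subset ?_ ?_)
    · exact Subgroup.subset_normalClosure.trans
        (SetLike.coe_subset_coe.2 (le_sup_right (a := Subgroup.normalClosure T)))
    · exact Subgroup.subset_normalClosure.trans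
        (SetLike.coe_subset_coe.2 (le_sup_left (b := Subgroup.normalClosure R)))

/-- The preimage in `A` of the finite residual of `A ⧸ H` lies in every finite index subgroup of
`A` that contains `H`. -/
theorem mem_of_mk_mem_finiteResidual {A : Type*} [Group A] {H N : Subgroup A} [H.Normal]
    (hHN : H ≤ N) (hN : N.index ≠ 0) {x : A}
    (hx : (QuotientGroup.mk' H x) ∈ finiteResidual (A ⧸ H)) : x ∈ N := by
  simp only [finiteResidual, Subgroup.mem_iInf] at hx
  have h1 := hx (N.map (QuotientGroup.mk' H))
    (ne_zero_of_dvd_ne_zero hN (N.index_map_dvd (QuotientGroup.mk'_surjective H)))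
  have h2 : x ∈ (N.map (QuotientGroup.mk' H)).comap (QuotientGroup.mk' H) := h1
  rwa [Subgroup.comap_map_eq, QuotientGroup.ker_mk', sup_eq_left.2 hHN] at h2


/-- if `G` is finitely presented, residually finite, with `rdef(G) > 1`,
and `g₁, …, g_m` are non-trivial, then `rdef(G/H_k) > 1` for infinitely many `k`, where
`H_k` is the normal closure of the `k`-th powers. -/
theorem statement17 {G : Type*} [Group G] (hG : FinitelyPresentedGroup G)
    (hrf : finiteResidual G = ⊥) (hrd : 1 < rdef G) (m : ℕ) (g : Fin m → G)
    (hg1 : ∀ i, g i ≠ 1) :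
    {k : ℕ |
      1 < rdef (G ⧸ Subgroup.normalClosure (Set.range fun i => g i ^ k))}.Infinite := by
  -- An empty set of values would have junk supremum `0`.
  have hne : (rdefSet G).Nonempty := by
    by_contra h
    rw [Set.not_nonempty_iff_eq_empty] at h
    have : rdef G = 0 := by
      change sSup (rdefSet G) = 0
      rw [h, Real.sSup_empty]
    linarith
  obtain ⟨x, ⟨n, s, u, a, φ, ha, hu, hφ, hker, rfl⟩, hx⟩ := exists_lt_of_lt_csSup hne hrd
  have hfg : Group.FG G := Group.fg_of_surjective hφ
  -- The elements of infinite order are the only ones that contribute a new relator.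
  let J := {j : Fin m // orderOf (g j) = 0}
  choose w hw using fun j => hφ (g j)
  have hw1 : ∀ j, w j ≠ 1 := fun j h => hg1 j (by rw [← hw, h, map_one])
  choose v e hv hve using fun j => exists_root (w j) (hw1 j)
  have he : ∀ j, 1 ≤ e j := by
    intro j
    by_contra h
    apply hw1 j
    rw [hve, show e j = 0 by omega, pow_zero]
  have hvinf : ∀ (j : J) (l : ℕ), 0 < l → φ (v j) ^ l ≠ 1 := by
    intro j l hl h
    have h0 := j.2
    rw [orderOf_eq_zero_iff'] at h0
    apply h0 l hl
    rw [← hw, hve, map_pow, ← pow_mul, mul_comm, pow_mul, h, one_pow]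
  set σ : ℝ := n - ∑ i, ((orderIn (finiteResidual G) (φ (u i)) : ℝ))⁻¹ with hσ
  obtain ⟨L, hL⟩ := exists_nat_gt (max 1 ((Fintype.card J : ℝ) / (σ - 1)))
  have hL0 : (0 : ℝ) < L := by linarith [le_max_left 1 ((Fintype.card J : ℝ) / (σ - 1))]
  have hLJ : (Fintype.card J : ℝ) * (L : ℝ)⁻¹ < σ - 1 := by
    have h1 := (le_max_right 1 ((Fintype.card J : ℝ) / (σ - 1))).trans_lt hL
    rw [div_lt_iff₀ (by linarith)] at h1
    rw [← div_eq_mul_inv, div_lt_iff₀ hL0]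
    linarith
  -- Modulo `N` the roots `u i` keep their orders and each `v j` has order at least `L`.
  obtain ⟨N, hN, hNi, hNo⟩ := exists_normal_order_ge
    (Sum.elim (fun i => φ (u i)) (fun j : J => φ (v j)))
    (Sum.elim (fun i => orderIn (finiteResidual G) (φ (u i))) (fun _ => L)) (by
      rintro (i | j) l hl hlt
      · exact notMem_of_lt_orderIn hl hlt
      · rw [hrf, Subgroup.mem_bot]
        exact hvinf j l hl)
  -- Multiples of `c` put `H` inside `N` and kill the torsion elements among the `g j`.
  let c := N.index * ∏ j, (if orderOf (g j) = 0 then 1 else orderOf (g j))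
  have hc : 0 < c := by
    refine Nat.mul_pos (Nat.pos_of_ne_zero hNi) (Finset.prod_pos fun j _ => ?_)
    split_ifs <;> omega
  refine Set.infinite_of_injective_forall_mem (f := fun t : ℕ => c * (t + 1)) ?_ ?_
  · intro t t' h
    have := Nat.eq_of_mul_eq_mul_left hc h
    omega
  intro t
  set k := c * (t + 1) with hk
  have hk0 : 1 ≤ k := Nat.mul_pos hc (Nat.succ_pos t)
  have hkN : N.index ∣ k := Dvd.intro _ rfl |>.trans (Dvd.intro _ rfl)
  have hktors : ∀ j, orderOf (g j) ≠ 0 → g j ^ k = 1 := by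
    intro j hj
    refine orderOf_dvd_iff_pow_eq_one.1 ?_
    have h1 := Finset.dvd_prod_of_mem
      (fun j => if orderOf (g j) = 0 then 1 else orderOf (g j)) (Finset.mem_univ j)
    rw [if_neg hj] at h1
    exact (h1.trans (Dvd.intro_left _ rfl)).trans (Dvd.intro _ rfl)
  change 1 < rdef (G ⧸ Subgroup.normalClosure (Set.range fun i => g i ^ k))
  set H := Subgroup.normalClosure (Set.range fun i => g i ^ k) with hHdef
  have hHN : H ≤ N := by
    refine Subgroup.normalClosure_le_normal ?_
    rintro _ ⟨j, rfl⟩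
    obtain ⟨q, hq⟩ := hkN
    change g j ^ k ∈ N
    rw [hq, pow_mul]
    exact pow_mem (N.pow_index_mem _) _
  have hT : ∀ j, φ (v j ^ (e j * k)) = g j ^ k := fun j => by
    rw [pow_mul, ← hve, map_pow, hw]
  have hH : H = Subgroup.normalClosure (φ '' (Set.range fun j : J => v j ^ (e j * k))) := by
    apply le_antisymm
    · refine Subgroup.normalClosure_le_normal ?_
      rintro _ ⟨j, rfl⟩
      change g j ^ k ∈ _
      by_cases hj : orderOf (g j) = 0
      · rw [← hT]
        exact Subgroup.subset_normalClosure ⟨_, ⟨⟨j, hj⟩, rfl⟩, rfl⟩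
      · rw [hktors j hj]
        exact one_mem _
    · refine Subgroup.normalClosure_mono ?_
      rintro _ ⟨_, ⟨j, rfl⟩, rfl⟩
      exact ⟨j, (hT j).symm⟩
  let U : Fin s ⊕ J → FreeGroup (Fin n) := Sum.elim u (fun j => v j)
  let M : Fin s ⊕ J → ℕ := Sum.elim a (fun j => e j * k)
  let ψ := (QuotientGroup.mk' H).comp φ
  have hM : ∀ i, 1 ≤ M i := by
    rintro (i | j)
    · exact ha i
    · exact Nat.mul_pos (he j) hk0
  have hψker : ψ.ker = Subgroup.normalClosure (Set.range fun i => U i ^ M i) := by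
    rw [ker_mk_comp hφ hker hH]
    congr 1
    ext z
    simp [U, M]
  have hres : ∀ (z : FreeGroup (Fin n)) (l : ℕ),
      ψ z ^ l ∈ finiteResidual (G ⧸ H) → φ z ^ l ∈ N := by
    intro z l hz
    refine mem_of_mk_mem_finiteResidual hHN hNi ?_
    rw [map_pow]
    exact hz
  -- Since `H ≤ N`, the lower bounds on orders modulo `N` hold modulo the residual of `G ⧸ H`.
  have hord : ∀ i, Sum.elim (fun i => orderIn (finiteResidual G) (φ (u i))) (fun _ : J => L) i
      ≤ orderIn (finiteResidual (G ⧸ H)) (ψ (U i)) := by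
    intro i
    refine le_orderIn (pow_mem_of_ker_eq hM hψker _ i) fun l hl hz => hNo i l hl ?_
    have := hres _ _ hz
    rcases i with i | j <;> exact this
  have hfinal := le_rdef U M ψ hM (by rintro (i | j); exacts [hu i, hv j])
    ((QuotientGroup.mk'_surjective H).comp hφ) hψker
  rw [Fintype.sum_sum_type] at hfinal
  have hs1 : ∑ i : Fin s, ((orderIn (finiteResidual (G ⧸ H)) (ψ (U (Sum.inl i))) : ℝ))⁻¹ ≤
      ∑ i, ((orderIn (finiteResidual G) (φ (u i)) : ℝ))⁻¹ := by
    refine Finset.sum_le_sum fun i _ => inv_anti₀ ?_ (by exact_mod_cast hord (Sum.inl i))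
    exact_mod_cast orderIn_pos (pow_mem_of_ker_eq ha hker _ i)
  have hs2 : ∑ j : J, ((orderIn (finiteResidual (G ⧸ H)) (ψ (U (Sum.inr j))) : ℝ))⁻¹ ≤
      Fintype.card J * (L : ℝ)⁻¹ := by
    refine (Finset.sum_le_card_nsmul _ _ (L : ℝ)⁻¹ fun j _ => ?_).trans ?_
    · exact inv_anti₀ hL0 (by exact_mod_cast hord (Sum.inr j))
    · simp
  linarith

end ResDef
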